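/- Let Σ be a pure (d-1)-dimensional vertex-decomposable simplicial complex with shedding vertex v, and let σ ∈ Σ be a nonempty face with v ∉ σ and σ ∪ {v} ∈ Σ. Then v is a shedding vertex of the link lk(σ,Σ); that is, lk(σ,Σ) \ {v} is vertex-decomposable of the same dimension as lk(σ,Σ), and lk({v}, lk(σ,Σ)) is vertex-decomposable of dimension one less. -/

import Mathlib

/-- An abstract simplicial complex on vertex type `V`: a collection of finite
subsets (faces) containing the empty set and closed under taking subsets. -/
def IsComplex {V : Type*} (K : Set (Finset V)) : Prop :=
  ∅ ∈ K ∧ ∀ σ ∈ K, ∀ τ ⊆ σ, τ ∈ K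

/-- The link `lk(σ,Σ) = {τ ∈ Σ : τ ∩ σ = ∅ ∧ τ ∪ σ ∈ Σ}`. -/
def linkC {V : Type*} [DecidableEq V] (K : Set (Finset V)) (σ : Finset V) :
    Set (Finset V) :=
  {τ ∈ K | τ ∩ σ = ∅ ∧ τ ∪ σ ∈ K}

/-- The deletion `Σ \ {v}`: all faces of `Σ` not containing `v`. -/
def delV {V : Type*} (K : Set (Finset V)) (v : V) : Set (Finset V) :=
  {σ ∈ K | v ∉ σ}

/-- `σ` is a facet (maximal face) of `K`. -/
def IsFacet {V : Type*} (K : Set (Finset V)) (σ : Finset V) : Prop :=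
  σ ∈ K ∧ ∀ τ ∈ K, σ ⊆ τ → σ = τ

/-- `K` is pure `(d-1)`-dimensional: every facet has exactly `d` elements. -/
def PureD {V : Type*} (K : Set (Finset V)) (d : ℕ) : Prop :=
  ∀ σ, IsFacet K σ → σ.card = d

/-- `K` is the `(d-1)`-simplex: the family of all subsets of a fixed
`d`-element set (for `d = 0` this is the complex `{∅}`). -/
def IsSimplexOn {V : Type*} (K : Set (Finset V)) (d : ℕ) : Prop :=
  ∃ S : Finset V, S.card = d ∧ K = {σ | σ ⊆ S}

/-- Vertex-decomposability for a pure `(d-1)`-dimensional complex (facets of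
cardinality `d`): either a `(d-1)`-simplex, or there is a shedding vertex `v`
with `K \ {v}` vertex-decomposable of the same dimension and `lk({v},K)`
vertex-decomposable of dimension one less. -/
inductive VD {V : Type*} [DecidableEq V] : ℕ → Set (Finset V) → Prop
  | simplex (d : ℕ) (K : Set (Finset V)) (h : IsSimplexOn K d) : VD d K
  | shed (d : ℕ) (K : Set (Finset V)) (v : V) (hK : IsComplex K)
      (hp : PureD K d) (hv : ({v} : Finset V) ∈ K)
      (hdel : VD d (delV K v)) (hlink : VD (d - 1) (linkC K {v})) : VD d K

/-!
Links commute with each other, and the link of a face commutes with the deletion of a vertex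
outside it. So `lk(σ,Σ) \ {v}` and `lk({v}, lk(σ,Σ))` are the links of `σ` in `Σ \ {v}` and in
`lk({v},Σ)`, and both are vertex-decomposable because all links of a vertex-decomposable complex
are. The latter is shown by induction along a shedding vertex `w` of `Σ`: if `w ∈ σ`, then
`lk(σ,Σ)` is the link of `σ \ {w}` in `lk({w},Σ)`; if `σ ∪ {w}` is a face, then `w` is again a
shedding vertex of `lk(σ,Σ)`; otherwise `lk(σ,Σ)` is the link of `σ` in `Σ \ {w}`.
-/

section Link

variable {V : Type*} [DecidableEq V] {K : Set (Finset V)} {σ τ : Finset V} {v : V} {d : ℕ}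

theorem IsComplex.mem_linkC_iff (hK : IsComplex K) :
    τ ∈ linkC K σ ↔ Disjoint τ σ ∧ τ ∪ σ ∈ K := by
  rw [Finset.disjoint_iff_inter_eq_empty]
  exact ⟨And.right, fun h => ⟨hK.2 _ h.2 _ Finset.subset_union_left, h⟩⟩

theorem IsComplex.mem_linkC_comm (hK : IsComplex K) : τ ∈ linkC K σ ↔ σ ∈ linkC K τ := by
  rw [hK.mem_linkC_iff, hK.mem_linkC_iff, disjoint_comm, Finset.union_comm]

theorem IsComplex.mem_linkC_singleton_iff (hK : IsComplex K) :
    σ ∈ linkC K {v} ↔ v ∉ σ ∧ σ ∪ {v} ∈ K := by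
  rw [hK.mem_linkC_iff, Finset.disjoint_singleton_right]

protected theorem IsComplex.linkC (hK : IsComplex K) (hσ : σ ∈ K) : IsComplex (linkC K σ) := by
  simp only [IsComplex, hK.mem_linkC_iff]
  refine ⟨⟨Finset.disjoint_empty_left σ, by rwa [Finset.empty_union]⟩, ?_⟩
  rintro τ ⟨hdisj, hface⟩ ρ hρτ
  exact ⟨hdisj.mono_left hρτ, hK.2 _ hface _ (Finset.union_subset_union_left hρτ)⟩

theorem linkC_linkC_comm (K : Set (Finset V)) (σ τ : Finset V) :
    linkC (linkC K σ) τ = linkC (linkC K τ) σ := by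
  ext ρ
  simp only [linkC, Set.mem_ofPred_eq, Finset.union_inter_distrib_right, Finset.union_eq_empty,
    Finset.inter_comm τ σ, Finset.union_right_comm ρ τ σ]
  tauto

theorem IsComplex.linkC_linkC_of_disjoint (hK : IsComplex K) (hστ : Disjoint σ τ) :
    linkC (linkC K σ) τ = linkC K (σ ∪ τ) := by
  ext ρ
  have hdown : ρ ∪ τ ∪ σ ∈ K → ρ ∪ σ ∈ K := fun hface =>
    hK.2 _ hface _ (Finset.union_subset_union_left Finset.subset_union_left)
  change ρ ∈ linkC K σ ∧ ρ ∩ τ = ∅ ∧ ρ ∪ τ ∈ linkC K σ ↔ ρ ∈ linkC K (σ ∪ τ)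
  rw [hK.mem_linkC_iff, hK.mem_linkC_iff, hK.mem_linkC_iff, ← Finset.disjoint_iff_inter_eq_empty,
    Finset.disjoint_union_left, Finset.disjoint_union_right, Finset.union_comm σ τ,
    ← Finset.union_assoc]
  have := hστ.symm
  tauto

theorem delV_linkC_of_notMem (K : Set (Finset V)) (hvσ : v ∉ σ) :
    delV (linkC K σ) v = linkC (delV K v) σ := by
  ext τ
  simp only [linkC, delV, Set.mem_ofPred_eq, Finset.mem_union]
  tauto

theorem IsComplex.linkC_delV_of_union_notMem (hK : IsComplex K) (hσv : σ ∪ {v} ∉ K) :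
    linkC (delV K v) σ = linkC K σ := by
  have v_notMem : ∀ ρ ∈ K, σ ⊆ ρ → v ∉ ρ := fun ρ hρ hσρ hvρ =>
    hσv (hK.2 ρ hρ _ (Finset.union_subset hσρ (Finset.singleton_subset_iff.2 hvρ)))
  ext τ
  refine ⟨fun ⟨hτ, hinter, hunion⟩ => ⟨hτ.1, hinter, hunion.1⟩, fun ⟨hτ, hinter, hunion⟩ => ?_⟩
  have hv := v_notMem _ hunion Finset.subset_union_right
  exact ⟨⟨hτ, fun hvτ => hv (Finset.mem_union_left σ hvτ)⟩, hinter, hunion, hv⟩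

theorem IsComplex.isFacet_union_of_isFacet_linkC (hK : IsComplex K)
    (hτ : IsFacet (linkC K σ) τ) : IsFacet K (τ ∪ σ) := by
  obtain ⟨hτ_link, hτ_max⟩ := hτ
  obtain ⟨hdisj, hface⟩ := hK.mem_linkC_iff.1 hτ_link
  refine ⟨hface, fun ρ hρ hsub => ?_⟩
  have hρ_sdiff : ρ \ σ ∪ σ = ρ :=
    Finset.sdiff_union_of_subset (Finset.subset_union_right.trans hsub)
  have hρ_link : ρ \ σ ∈ linkC K σ :=
    hK.mem_linkC_iff.2 ⟨Finset.sdiff_disjoint, by rwa [hρ_sdiff]⟩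
  have hτρ : τ ⊆ ρ \ σ := Finset.subset_sdiff.2 ⟨Finset.subset_union_left.trans hsub, hdisj⟩
  rw [hτ_max _ hρ_link hτρ, hρ_sdiff]

protected theorem PureD.linkC (hp : PureD K d) (hK : IsComplex K) (σ : Finset V) :
    PureD (linkC K σ) (d - σ.card) := by
  intro τ hτ
  have hdisj : Disjoint τ σ := (hK.mem_linkC_iff.1 hτ.1).1
  rw [← hp _ (hK.isFacet_union_of_isFacet_linkC hτ), Finset.card_union_of_disjoint hdisj,
    Nat.add_sub_cancel]

protected theorem IsSimplexOn.linkC (hK : IsSimplexOn K d) (hσ : σ ∈ K) :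
    IsSimplexOn (linkC K σ) (d - σ.card) := by
  obtain ⟨S, rfl, rfl⟩ := hK
  have hσS : σ ⊆ S := hσ
  refine ⟨S \ σ, Finset.card_sdiff_of_subset hσS, ?_⟩
  ext τ
  simp only [linkC, Set.mem_ofPred_eq, Finset.subset_sdiff, Finset.disjoint_iff_inter_eq_empty,
    Finset.union_subset_iff]
  tauto

protected theorem VD.linkC (hvd : VD d K) (hσ : σ ∈ K) : VD (d - σ.card) (linkC K σ) := by
  induction hvd generalizing σ with
  | simplex d K hsimplex => exact .simplex _ _ (hsimplex.linkC hσ)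
  | shed d K w hK hp _ _ _ ih_del ih_link =>
    by_cases hwσ : w ∈ σ
    · have herase : σ.erase w ∪ {w} = σ := by
        rw [Finset.union_singleton, Finset.insert_erase hwσ]
      have hmem : σ.erase w ∈ linkC K {w} :=
        hK.mem_linkC_singleton_iff.2 ⟨Finset.notMem_erase w σ, by rwa [herase]⟩
      have hlink_erase : linkC (linkC K {w}) (σ.erase w) = linkC K σ := by
        rw [hK.linkC_linkC_of_disjoint (Finset.disjoint_singleton_left.2
          (Finset.notMem_erase w σ)), Finset.union_comm, herase]
      have hcard : d - 1 - (σ.erase w).card = d - σ.card := by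
        rw [Nat.sub_sub, Nat.add_comm, Finset.card_erase_add_one hwσ]
      rw [← hlink_erase, ← hcard]
      exact ih_link hmem
    · have hdel : VD (d - σ.card) (linkC (delV K w) σ) := ih_del ⟨hσ, hwσ⟩
      by_cases hσw : σ ∪ {w} ∈ K
      · have hmem : σ ∈ linkC K {w} := hK.mem_linkC_singleton_iff.2 ⟨hwσ, hσw⟩
        refine .shed _ _ w (hK.linkC hσ) (hp.linkC hK σ) (hK.mem_linkC_comm.1 hmem) ?_ ?_
        · rwa [delV_linkC_of_notMem K hwσ]
        · rw [linkC_linkC_comm, Nat.sub_right_comm]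
          exact ih_link hmem
      · rwa [← hK.linkC_delV_of_union_notMem hσw]

end Link

/-- If `v` is a shedding vertex of the pure `(d-1)`-dimensional
vertex-decomposable complex `Σ` and `σ ∈ Σ` is a nonempty face with `v ∉ σ`
and `σ ∪ {v} ∈ Σ`, then `v` is a shedding vertex of `lk(σ,Σ)`: the deletion
`lk(σ,Σ) \ {v}` is vertex-decomposable of the same dimension as `lk(σ,Σ)`,
and `lk({v}, lk(σ,Σ))` is vertex-decomposable of dimension one less. -/
theorem shedding_vertex_of_link {V : Type*} [DecidableEq V]
    (K : Set (Finset V)) (hK : IsComplex K) (d : ℕ) (hp : PureD K d)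
    (hvd : VD d K) (v : V) (hv : ({v} : Finset V) ∈ K)
    (hdel : VD d (delV K v)) (hlink : VD (d - 1) (linkC K {v}))
    (σ : Finset V) (hσ : σ ∈ K) (hne : σ.Nonempty) (hvσ : v ∉ σ)
    (hσv : σ ∪ {v} ∈ K) :
    ({v} : Finset V) ∈ linkC K σ ∧
    VD (d - σ.card) (delV (linkC K σ) v) ∧
    VD (d - σ.card - 1) (linkC (linkC K σ) {v}) := by
  have hmem : σ ∈ linkC K {v} := hK.mem_linkC_singleton_iff.2 ⟨hvσ, hσv⟩
  refine ⟨hK.mem_linkC_comm.1 hmem, ?_, ?_⟩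
  · rw [delV_linkC_of_notMem K hvσ]
    exact hdel.linkC ⟨hσ, hvσ⟩
  · rw [linkC_linkC_comm, Nat.sub_right_comm]
    exact hlink.linkC hmem
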